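/- Let d ≥ 1 be an integer, m ∈ {0,1,…,d−1}, c > −1 and t ≥ 0 real. For N ≥ 1 set n = dN + m and A₁ := (dN+m)² t² + log c_{N,d}(m) + d log(N^{−N(N+1)/2} ∏_{k=1}^N k!), where c_{N,d}(m) = ((dN+m)!/(N!)^d) · d^{−(dN+m)} · (N/(dN+m))^{(d/2)N² + ((1+2c+2m)/2)N + m(1+2c+m)/(2d)}. Then as N → ∞, A₁ = (t² − 3/(4d) − (log d)/(2d)) n² + (1/2) n log n + (log(2π)/2 − 1 − ((1+2c+d)/(2d)) log d) n + ((6−d)/12) log n + d ζ'(−1) + (d/12) log d + log(2π)/2 + m( N + (log N)/2 − log(2π)/2 + (d−2c−1)/(2d) ) + O(1/n), where ζ' denotes the derivative of the Riemann zeta function. -/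

import Mathlib

/-!
Since `∑_{k ≤ N} log k! = (N + 1) log N! - ∑_{k ≤ N} k log k`, everything reduces to expansions of
`log N!`, of `∑ k log k` and of `log (dN + m)`, each with a remainder small enough to leave `O(1/N)`.

The first two sums are handled by the Euler–Maclaurin formula in the form of `emSeq`: the sequence
`∑_{k ≤ N} g k - G N - g N / 2 - g' N / 12`, with `G' = g`, has increments bounded by the fourth
derivative of `g` (`emSeq_succ_sub`). Hence for `g = log` and `g = x log x` the sequence is within
`O(1/N²)` of its limit (`norm_sub_le_of_cubic_increments`). For `g = log` the limit is
`log (2π) / 2` by Stirling's formula.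

For `g = x log x` the limit is `-ζ'(-1)`. To see this, apply the same construction to
`g = x ^ (-s)` with `s` complex (`zetaApprox`). The increments are `O(N⁻²)` uniformly on a bounded
convex region in `Re s > -2` that avoids `s = 1`, contains `-1` and meets `Re s > 1`. The limit is
therefore holomorphic there; it equals `ζ` where `Re s > 1`, hence on the whole region, and the
derivatives at `-1` converge as well. The derivative at `-1` of the `N`-th approximation is minus
the `N`-th term of the sequence for `x log x` (`deriv_zetaApprox_neg_one`).

Inserting the expansions, all terms that do not decay cancel (`residual_identity`), and
`residual_bound` estimates the rest.
-/

open MeasureTheory Real Finset Filter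

/-! ### Euler–Maclaurin summation -/

theorem norm_le_of_deriv_bound {E : Type*} [NormedAddCommGroup E] [NormedSpace ℝ E]
    {f f' : ℝ → E} {M : ℝ} (h0 : f 0 = 0)
    (hf : ∀ x ∈ Set.Icc (0 : ℝ) 1, HasDerivAt f (f' x) x)
    (hM : ∀ x ∈ Set.Icc (0 : ℝ) 1, ‖f' x‖ ≤ M) :
    ∀ x ∈ Set.Icc (0 : ℝ) 1, ‖f x‖ ≤ M := by
  intro x hx
  have h := norm_image_sub_le_of_norm_deriv_le_segment'
    (fun y hy => (hf y hy).hasDerivWithinAt) (fun y hy => hM y ⟨hy.1, hy.2.le⟩) x hx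
  rw [h0, sub_zero, sub_zero] at h
  have hM0 : 0 ≤ M := (norm_nonneg _).trans (hM x hx)
  exact h.trans (mul_le_of_le_one_right hM0 hx.2)

/-- Corrected trapezoidal rule on `[a, a + 1]`. Replacing the length `1` of the interval by `y`
(and `1 / 12` by `y ^ 2 / 12`) gives a function of `y` that vanishes at `0` with its first
two derivatives and whose third derivative is `-(y ^ 2 / 12) g₄ (a + y)`. -/
theorem euler_maclaurin_step {E : Type*} [NormedAddCommGroup E] [NormedSpace ℝ E]
    {G g g₁ g₂ g₃ g₄ : ℝ → E} {a M : ℝ}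
    (hG : ∀ x ∈ Set.Icc a (a + 1), HasDerivAt G (g x) x)
    (hg : ∀ x ∈ Set.Icc a (a + 1), HasDerivAt g (g₁ x) x)
    (hg₁ : ∀ x ∈ Set.Icc a (a + 1), HasDerivAt g₁ (g₂ x) x)
    (hg₂ : ∀ x ∈ Set.Icc a (a + 1), HasDerivAt g₂ (g₃ x) x)
    (hg₃ : ∀ x ∈ Set.Icc a (a + 1), HasDerivAt g₃ (g₄ x) x)
    (hM : ∀ x ∈ Set.Icc a (a + 1), ‖g₄ x‖ ≤ M) :
    ‖(1 / 2 : ℝ) • (g a + g (a + 1)) - (G (a + 1) - G a)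
      - (1 / 12 : ℝ) • (g₁ (a + 1) - g₁ a)‖ ≤ M := by
  have mem : ∀ y ∈ Set.Icc (0 : ℝ) 1, a + y ∈ Set.Icc a (a + 1) := fun y hy =>
    ⟨by linarith [hy.1], by linarith [hy.2]⟩
  have dG := fun y hy => HasDerivAt.comp_const_add a y (hG _ (mem y hy))
  have dg := fun y hy => HasDerivAt.comp_const_add a y (hg _ (mem y hy))
  have dg₁ := fun y hy => HasDerivAt.comp_const_add a y (hg₁ _ (mem y hy))
  have dg₂ := fun y hy => HasDerivAt.comp_const_add a y (hg₂ _ (mem y hy))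
  have dg₃ := fun y hy => HasDerivAt.comp_const_add a y (hg₃ _ (mem y hy))
  let h : ℝ → E := fun y => (y / 2) • (g a + g (a + y)) - (G (a + y) - G a)
    - (y ^ 2 / 12) • (g₁ (a + y) - g₁ a)
  let h' : ℝ → E := fun y => (1 / 2 : ℝ) • (g a - g (a + y)) + (y / 2) • g₁ (a + y)
    - (y / 6) • (g₁ (a + y) - g₁ a) - (y ^ 2 / 12) • g₂ (a + y)
  let h'' : ℝ → E := fun y => (y / 6) • g₂ (a + y)
    - (1 / 6 : ℝ) • (g₁ (a + y) - g₁ a) - (y ^ 2 / 12) • g₃ (a + y)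
  let h''' : ℝ → E := fun y => (-(y ^ 2 / 12)) • g₄ (a + y)
  have did : ∀ (k : ℝ) (y : ℝ), HasDerivAt (fun y : ℝ => y / k) (1 / k) y := fun k y =>
    (hasDerivAt_id y).div_const k
  have dsq : ∀ y : ℝ, HasDerivAt (fun y : ℝ => y ^ 2 / 12) (y / 6) y := fun y =>
    ((hasDerivAt_pow 2 y).div_const 12).congr_deriv (by push_cast; ring)
  have dh : ∀ y ∈ Set.Icc (0 : ℝ) 1, HasDerivAt h (h' y) y := fun y hy => by
    convert! (((did 2 y).smul ((dg y hy).const_add (g a))).sub ((dG y hy).sub_const (G a))).sub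
      ((dsq y).smul ((dg₁ y hy).sub_const (g₁ a))) using 1
    simp only [h']
    module
  have dh' : ∀ y ∈ Set.Icc (0 : ℝ) 1, HasDerivAt h' (h'' y) y := fun y hy => by
    convert! (((((dg y hy).const_sub (g a)).const_smul (1 / 2 : ℝ)).add
      ((did 2 y).smul (dg₁ y hy))).sub ((did 6 y).smul ((dg₁ y hy).sub_const (g₁ a)))).sub
      ((dsq y).smul (dg₂ y hy)) using 1
    simp only [h'']
    module
  have dh'' : ∀ y ∈ Set.Icc (0 : ℝ) 1, HasDerivAt h'' (h''' y) y := fun y hy => by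
    convert! (((did 6 y).smul (dg₂ y hy)).sub
      (((dg₁ y hy).sub_const (g₁ a)).const_smul (1 / 6 : ℝ))).sub
      ((dsq y).smul (dg₃ y hy)) using 1
    simp only [h''']
    module
  have b3 : ∀ y ∈ Set.Icc (0 : ℝ) 1, ‖h''' y‖ ≤ M := fun y hy => by
    simp only [h''', norm_smul, norm_neg, Real.norm_eq_abs]
    have hy2 : |y ^ 2 / 12| ≤ 1 := by
      rw [abs_of_nonneg (by positivity)]
      nlinarith [hy.1, hy.2]
    calc _ ≤ 1 * ‖g₄ (a + y)‖ := by gcongr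
      _ ≤ M := by rw [one_mul]; exact hM _ (mem y hy)
  have b2 := norm_le_of_deriv_bound (by simp [h'']) dh'' b3
  have b1 := norm_le_of_deriv_bound (by simp [h']) dh' b2
  have b0 := norm_le_of_deriv_bound (by simp [h]) dh b1 1 (by simp)
  simpa [h] using b0

/-- Euler–Maclaurin partial sums `∑_{k=1}^N g k - G N - g N / 2 - g₁ N / 12`, meant for `G' = g` and
`g' = g₁`. -/
noncomputable def emSeq {E : Type*} [NormedAddCommGroup E] [NormedSpace ℝ E]
    (G g g₁ : ℝ → E) (N : ℕ) : E :=
  ∑ k ∈ Finset.Icc 1 N, g k - G N - (1 / 2 : ℝ) • g N - (1 / 12 : ℝ) • g₁ N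

theorem emSeq_succ_sub {E : Type*} [NormedAddCommGroup E] [NormedSpace ℝ E]
    {G g g₁ g₂ g₃ g₄ : ℝ → E} {M : ℝ} {N : ℕ} (hN : 1 ≤ N)
    (hG : ∀ x : ℝ, 0 < x → HasDerivAt G (g x) x)
    (hg : ∀ x : ℝ, 0 < x → HasDerivAt g (g₁ x) x)
    (hg₁ : ∀ x : ℝ, 0 < x → HasDerivAt g₁ (g₂ x) x)
    (hg₂ : ∀ x : ℝ, 0 < x → HasDerivAt g₂ (g₃ x) x)
    (hg₃ : ∀ x : ℝ, 0 < x → HasDerivAt g₃ (g₄ x) x)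
    (hM : ∀ x : ℝ, (N : ℝ) ≤ x → ‖g₄ x‖ ≤ M) :
    ‖emSeq G g g₁ (N + 1) - emSeq G g g₁ N‖ ≤ M := by
  have hN' : (0 : ℝ) < N := by exact_mod_cast hN
  have key := euler_maclaurin_step (a := (N : ℝ)) (M := M)
    (fun x hx => hG x (hN'.trans_le hx.1)) (fun x hx => hg x (hN'.trans_le hx.1))
    (fun x hx => hg₁ x (hN'.trans_le hx.1)) (fun x hx => hg₂ x (hN'.trans_le hx.1))
    (fun x hx => hg₃ x (hN'.trans_le hx.1)) (fun x hx => hM x hx.1)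
  convert key using 2
  simp only [emSeq]
  rw [Finset.sum_Icc_succ_top (by omega)]
  push_cast
  module

/-- The factor `2` comes from `1 / x ^ 3 ≤ 2 (1 / x ^ 2 - 1 / (x + 1) ^ 2)` for `x ≥ 1`, which makes
the bounds on the increments telescope. -/
theorem norm_sub_le_of_cubic_increments {E : Type*} [NormedAddCommGroup E]
    {u : ℕ → E} {l : E} {C : ℝ}
    (hu : ∀ N : ℕ, 1 ≤ N → ‖u (N + 1) - u N‖ ≤ C / (N : ℝ) ^ 3)
    (hl : Tendsto u atTop (nhds l)) {N : ℕ} (hN : 1 ≤ N) :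
    ‖u N - l‖ ≤ 2 * C / (N : ℝ) ^ 2 := by
  have hC : 0 ≤ C := by
    have := (norm_nonneg _).trans (hu 1 le_rfl)
    simpa using this
  have hstep : ∀ k : ℕ, ‖u N - u (N + k)‖ ≤
      2 * C / (N : ℝ) ^ 2 - 2 * C / ((N + k : ℕ) : ℝ) ^ 2 := by
    intro k
    induction k with
    | zero => simp
    | succ k ih =>
      have h1 := hu (N + k) (by omega)
      have hx : (1 : ℝ) ≤ ((N + k : ℕ) : ℝ) := by exact_mod_cast (by omega : 1 ≤ N + k)
      have h2 : C / ((N + k : ℕ) : ℝ) ^ 3 ≤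
          2 * C / ((N + k : ℕ) : ℝ) ^ 2 - 2 * C / ((N + (k + 1) : ℕ) : ℝ) ^ 2 := by
        have e : ((N + (k + 1) : ℕ) : ℝ) = ((N + k : ℕ) : ℝ) + 1 := by push_cast; ring
        rw [e]
        generalize ((N + k : ℕ) : ℝ) = x at hx
        have hx0 : 0 < x := by linarith
        rw [← sub_nonneg]
        have : 2 * C / x ^ 2 - 2 * C / (x + 1) ^ 2 - C / x ^ 3
            = C * (3 * x ^ 2 - 1) / (x ^ 3 * (x + 1) ^ 2) := by
          field_simp
          ring
        rw [this]
        have : 0 ≤ 3 * x ^ 2 - 1 := by nlinarith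
        positivity
      calc ‖u N - u (N + (k + 1))‖
          = ‖(u N - u (N + k)) - (u (N + k + 1) - u (N + k))‖ := by
            rw [← add_assoc]; congr 1; abel
        _ ≤ _ := norm_sub_le _ _
        _ ≤ _ := by linarith
  have hlim : Tendsto (fun k : ℕ => ‖u N - u (N + k)‖) atTop (nhds ‖u N - l‖) := by
    refine (tendsto_const_nhds.sub ?_).norm
    simpa [add_comm] using (tendsto_add_atTop_iff_nat N).2 hl
  refine le_of_tendsto hlim (Eventually.of_forall fun k => (hstep k).trans ?_)
  have : 0 ≤ 2 * C / ((N + k : ℕ) : ℝ) ^ 2 := by positivity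
  linarith

/-! ### The sums of `log k` and of `k log k` -/

theorem hasDerivAt_mul_zpow (k : ℝ) (p : ℤ) {x : ℝ} (hx : 0 < x) :
    HasDerivAt (fun x : ℝ => k * x ^ p) (k * p * x ^ (p - 1)) x :=
  ((hasDerivAt_zpow p x (Or.inl hx.ne')).const_mul k).congr_deriv (by ring)

theorem stirling_increments {N : ℕ} (hN : 1 ≤ N) :
    ‖emSeq (fun x : ℝ => x * Real.log x - x) Real.log (fun x => 1 * x ^ (-1 : ℤ)) (N + 1)
      - emSeq (fun x : ℝ => x * Real.log x - x) Real.log (fun x => 1 * x ^ (-1 : ℤ)) N‖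
      ≤ 6 / (N : ℝ) ^ 3 := by
  have hN' : (1 : ℝ) ≤ N := by exact_mod_cast hN
  refine emSeq_succ_sub hN (fun x hx => ?_) (fun x hx => ?_)
    (fun x hx => hasDerivAt_mul_zpow _ _ hx) (fun x hx => hasDerivAt_mul_zpow _ _ hx)
    (fun x hx => hasDerivAt_mul_zpow _ _ hx) (fun x hx => ?_)
  · refine (((hasDerivAt_id x).mul (Real.hasDerivAt_log hx.ne')).sub
      (hasDerivAt_id x)).congr_deriv ?_
    simp [hx.ne']
  · simpa using Real.hasDerivAt_log hx.ne'
  · have hx0 : 0 < x := by linarith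
    have e : (1 * ((-1 : ℤ) : ℝ) * ((-1 - 1 : ℤ) : ℝ) * ((-1 - 1 - 1 : ℤ) : ℝ)
        * x ^ (-1 - 1 - 1 - 1 : ℤ)) = -(6 / x ^ 4) := by
      rw [show (-1 - 1 - 1 - 1 : ℤ) = -((4 : ℕ) : ℤ) by norm_num, zpow_neg, zpow_natCast]
      push_cast
      ring
    rw [e, norm_neg, Real.norm_of_nonneg (by positivity)]
    calc 6 / x ^ 4 ≤ 6 / x ^ 3 := by
          gcongr
          · linarith
          · norm_num
      _ ≤ 6 / (N : ℝ) ^ 3 := by gcongr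

theorem sum_log_eq_log_factorial (N : ℕ) :
    ∑ k ∈ Finset.Icc 1 N, Real.log (k : ℝ) = Real.log (N.factorial : ℝ) := by
  induction N with
  | zero => simp
  | succ N ih =>
    rw [Finset.sum_Icc_succ_top (by omega), ih, Nat.factorial_succ, Nat.cast_mul,
      Real.log_mul (by positivity) (by positivity), add_comm]

/-- Stirling's formula with the `1 / (12 N)` term; the `1 / N ^ 2` error survives multiplication by
`N`, which is needed because `log N!` enters the final expansion with weight of order `N`. -/
theorem log_factorial_expansion {N : ℕ} (hN : 1 ≤ N) :
    |Real.log (N.factorial : ℝ) - (N * Real.log N - N + Real.log N / 2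
      + Real.log (2 * π) / 2 + 1 / (12 * N))| ≤ 12 / (N : ℝ) ^ 2 := by
  have hlim : Tendsto (emSeq (fun x : ℝ => x * Real.log x - x) Real.log
      (fun x => 1 * x ^ (-1 : ℤ))) atTop (nhds (Real.log (2 * π) / 2)) := by
    have h1 : Tendsto (fun n : ℕ => Real.log (Stirling.stirlingSeq n)) atTop
        (nhds (Real.log (√π))) :=
      Stirling.tendsto_stirlingSeq_sqrt_pi.log (by positivity)
    have h2 : Tendsto (fun n : ℕ => (1 / 12 : ℝ) * (n : ℝ)⁻¹) atTop (nhds 0) := by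
      simpa using tendsto_natCast_atTop_atTop.inv_tendsto_atTop.const_mul (1 / 12 : ℝ)
    have h3 := (h1.add_const (Real.log 2 / 2)).sub h2
    have e : Real.log (2 * π) / 2 = Real.log (√π) + Real.log 2 / 2 - 0 := by
      rw [Real.log_sqrt pi_pos.le, Real.log_mul two_ne_zero pi_ne_zero]
      ring
    rw [e]
    refine h3.congr' ?_
    filter_upwards [eventually_ge_atTop 1] with n hn
    have hn' : (n : ℝ) ≠ 0 := by positivity
    rw [Stirling.log_stirlingSeq_formula, emSeq, sum_log_eq_log_factorial,
      Real.log_mul two_ne_zero hn', Real.log_div hn' (Real.exp_ne_zero 1), Real.log_exp]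
    simp only [smul_eq_mul, zpow_neg_one]
    ring
  have h := norm_sub_le_of_cubic_increments (fun N hN => stirling_increments hN) hlim hN
  rw [Real.norm_eq_abs, emSeq, sum_log_eq_log_factorial] at h
  have hn' : (N : ℝ) ≠ 0 := by positivity
  convert h using 2
  · simp only [smul_eq_mul, zpow_neg_one]
    field_simp
    ring
  · norm_num

theorem glaisher_increments {N : ℕ} (hN : 1 ≤ N) :
    ‖emSeq (fun x : ℝ => x ^ 2 * Real.log x / 2 - x ^ 2 / 4) (fun x => x * Real.log x)
        (fun x => Real.log x + 1) (N + 1)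
      - emSeq (fun x : ℝ => x ^ 2 * Real.log x / 2 - x ^ 2 / 4) (fun x => x * Real.log x)
        (fun x => Real.log x + 1) N‖ ≤ 2 / (N : ℝ) ^ 3 := by
  have hN' : (1 : ℝ) ≤ N := by exact_mod_cast hN
  refine emSeq_succ_sub hN (g₂ := fun x => 1 * x ^ (-1 : ℤ)) (fun x hx => ?_) (fun x hx => ?_)
    (fun x hx => ?_) (fun x hx => hasDerivAt_mul_zpow _ _ hx)
    (fun x hx => hasDerivAt_mul_zpow _ _ hx) (fun x hx => ?_)
  · refine ((((hasDerivAt_pow 2 x).mul (Real.hasDerivAt_log hx.ne')).div_const 2).sub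
      ((hasDerivAt_pow 2 x).div_const 4)).congr_deriv ?_
    push_cast
    field_simp
    ring
  · refine ((hasDerivAt_id x).mul (Real.hasDerivAt_log hx.ne')).congr_deriv ?_
    simp [hx.ne']
  · simpa using (Real.hasDerivAt_log hx.ne').add_const 1
  · have hx0 : 0 < x := by linarith
    have e : (1 * ((-1 : ℤ) : ℝ) * ((-1 - 1 : ℤ) : ℝ) * x ^ (-1 - 1 - 1 : ℤ)) = 2 / x ^ 3 := by
      rw [show (-1 - 1 - 1 : ℤ) = -((3 : ℕ) : ℤ) by norm_num, zpow_neg, zpow_natCast]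
      push_cast
      ring
    rw [e, Real.norm_of_nonneg (by positivity)]
    gcongr

theorem sum_log_factorial (N : ℕ) :
    ∑ k ∈ Finset.Icc 1 N, Real.log (k.factorial : ℝ)
      = (N + 1) * Real.log (N.factorial : ℝ) - ∑ k ∈ Finset.Icc 1 N, (k : ℝ) * Real.log k := by
  induction N with
  | zero => simp
  | succ N ih =>
    rw [Finset.sum_Icc_succ_top (by omega), Finset.sum_Icc_succ_top (by omega), ih,
      Nat.factorial_succ, Nat.cast_mul, Real.log_mul (by positivity) (by positivity)]
    push_cast
    ring

/-! ### Approximation of `ζ` and of `ζ'(-1)` -/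

/-- The Euler–Maclaurin partial sums for `x ^ (-s)`, which approximate `ζ(s)`. -/
noncomputable def zetaApprox (N : ℕ) (s : ℂ) : ℂ :=
  emSeq (fun x : ℝ => (x : ℂ) ^ (1 - s) / (1 - s)) (fun x : ℝ => (x : ℂ) ^ (-s))
    (fun x : ℝ => -s * (x : ℂ) ^ (-s - 1)) N

theorem hasDerivAt_mul_cpow (k r : ℂ) {x : ℝ} (hx : 0 < x) :
    HasDerivAt (fun x : ℝ => k * (x : ℂ) ^ r) (k * r * (x : ℂ) ^ (r - 1)) x := by
  have h : HasDerivAt (fun z : ℂ => k * z ^ r) (k * r * (x : ℂ) ^ (r - 1)) (x : ℂ) :=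
    (((hasDerivAt_id (x : ℂ)).cpow_const (c := r)
      (Or.inl (by simpa using hx))).const_mul k).congr_deriv (by simp; ring)
  exact h.comp_ofReal

/-- Each of the four factors of the fourth derivative of `x ^ (-s)` has norm at most `4 + 3`, and
`Re s > -2` turns `x ^ (-s - 4)` into at most `x ^ (-2)`. -/
theorem zetaApprox_increments {N : ℕ} (hN : 1 ≤ N) {s : ℂ} (hs : -2 < s.re) (hs' : ‖s‖ < 4)
    (hs1 : s ≠ 1) : ‖zetaApprox (N + 1) s - zetaApprox N s‖ ≤ 7 ^ 4 * (1 / (N : ℝ) ^ 2) := by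
  have hN' : (1 : ℝ) ≤ N := by exact_mod_cast hN
  have hs1' : 1 - s ≠ 0 := sub_ne_zero.2 hs1.symm
  refine emSeq_succ_sub hN (fun x hx => ?_) (fun x hx => ?_)
    (fun x hx => hasDerivAt_mul_cpow _ _ hx) (fun x hx => hasDerivAt_mul_cpow _ _ hx)
    (fun x hx => hasDerivAt_mul_cpow _ _ hx) (fun x hx => ?_)
  · have := hasDerivAt_mul_cpow (1 / (1 - s)) (1 - s) hx
    rw [one_div_mul_cancel hs1', one_mul, show 1 - s - 1 = -s by ring] at this
    refine this.congr_of_eventuallyEq (Eventually.of_forall fun y => ?_)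
    ring
  · simpa using hasDerivAt_mul_cpow 1 (-s) hx
  · have hx1 : 1 ≤ x := hN'.trans hx
    have hx0 : 0 < x := by linarith
    have b : ∀ j : ℂ, ‖j‖ ≤ 3 → ‖-s - j‖ ≤ 7 := fun j hj => by
      calc ‖-s - j‖ ≤ ‖-s‖ + ‖j‖ := norm_sub_le _ _
        _ ≤ 7 := by rw [norm_neg]; linarith
    have b0 := b 0 (by simp)
    have b1 := b 1 (by simp)
    have b2 := b 2 (by simp; norm_num)
    have b3 := b 3 (by simp)
    rw [sub_zero] at b0
    rw [norm_mul, norm_mul, norm_mul, norm_mul, Complex.norm_cpow_eq_rpow_re_of_pos hx0]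
    rw [show -s - 1 - 1 = -s - 2 by ring, show -s - 2 - 1 = -s - 3 by ring]
    have hp : x ^ (-s - 3 - 1).re ≤ 1 / (N : ℝ) ^ 2 := by
      calc x ^ (-s - 3 - 1).re ≤ x ^ (-2 : ℝ) := by
            apply Real.rpow_le_rpow_of_exponent_le hx1
            simp
            linarith
        _ = 1 / x ^ 2 := by
            rw [Real.rpow_neg hx0.le, one_div]
            norm_num
        _ ≤ 1 / (N : ℝ) ^ 2 := by gcongr
    calc _ ≤ (7 * 7 * 7 * 7) * (1 / (N : ℝ) ^ 2) := by gcongr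
      _ = _ := by norm_num

theorem zetaApprox_eq (N : ℕ) (s : ℂ) :
    zetaApprox N s = ∑ k ∈ Finset.Icc 1 N, (k : ℂ) ^ (-s) - (N : ℂ) ^ (1 - s) / (1 - s)
      - (N : ℂ) ^ (-s) / 2 + s * (N : ℂ) ^ (-s - 1) / 12 := by
  simp only [zetaApprox, emSeq, Complex.real_smul]
  push_cast
  ring

theorem tendsto_natCast_cpow_zero {r : ℂ} (hr : r.re < 0) :
    Tendsto (fun N : ℕ => (N : ℂ) ^ r) atTop (nhds 0) := by
  rw [tendsto_zero_iff_norm_tendsto_zero]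
  have h : Tendsto (fun N : ℕ => (N : ℝ) ^ (-(-r.re))) atTop (nhds 0) :=
    (tendsto_rpow_neg_atTop (by linarith)).comp tendsto_natCast_atTop_atTop
  refine h.congr' ?_
  filter_upwards [eventually_ge_atTop 1] with N hN
  rw [neg_neg, Complex.norm_natCast_cpow_of_pos (by omega)]

theorem tendsto_zetaApprox {s : ℂ} (hs : 1 < s.re) :
    Tendsto (fun N => zetaApprox N s) atTop (nhds (riemannZeta s)) := by
  have h1 : Tendsto (fun N : ℕ => ∑ k ∈ Finset.Icc 1 N, (k : ℂ) ^ (-s)) atTop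
      (nhds (riemannZeta s)) := by
    have hsum : Summable (fun n : ℕ => 1 / (n : ℂ) ^ s) :=
      Complex.summable_one_div_nat_cpow.2 hs
    have h2 := hsum.hasSum.tendsto_sum_nat
    rw [← zeta_eq_tsum_one_div_nat_cpow hs] at h2
    refine ((tendsto_add_atTop_iff_nat 1).2 h2).congr fun N => ?_
    rw [Finset.range_eq_Ico, Finset.sum_eq_sum_Ico_succ_bot (by omega)]
    have hs0 : s ≠ 0 := Complex.ne_zero_of_one_lt_re hs
    simp only [Nat.cast_zero, Complex.zero_cpow hs0, div_zero, zero_add]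
    exact Finset.sum_congr (by ext k; simp) fun k _ => by
      rw [Complex.cpow_neg, one_div]
  have h2 := (tendsto_natCast_cpow_zero (r := 1 - s) (by simpa using hs)).div_const (1 - s)
  have h3 := (tendsto_natCast_cpow_zero (r := -s) (by simp; linarith)).div_const 2
  have h4 := ((tendsto_natCast_cpow_zero (r := -s - 1) (by simp; linarith)).const_mul s).div_const 12
  have h := ((h1.sub h2).sub h3).add h4
  simp only [mul_zero, zero_div, sub_zero, add_zero] at h
  exact h.congr fun N => (zetaApprox_eq N s).symm

theorem hasDerivAt_natCast_cpow {k : ℕ} (hk : 1 ≤ k) {f : ℂ → ℂ} {f' s : ℂ}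
    (hf : HasDerivAt f f' s) :
    HasDerivAt (fun s => (k : ℂ) ^ f s) ((k : ℂ) ^ f s * Complex.log k * f') s :=
  hf.const_cpow (Or.inl (by exact_mod_cast (by omega : k ≠ 0)))

theorem hasDerivAt_zetaApprox {N : ℕ} (hN : 1 ≤ N) {s : ℂ} (hs : s ≠ 1) :
    HasDerivAt (zetaApprox N)
      (∑ k ∈ Finset.Icc 1 N, (k : ℂ) ^ (-s) * Complex.log k * (-1)
        - ((N : ℂ) ^ (1 - s) * Complex.log N * (-1) * (1 - s) - (N : ℂ) ^ (1 - s) * (-1))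
          / (1 - s) ^ 2
        - (N : ℂ) ^ (-s) * Complex.log N * (-1) / 2
        + (1 * (N : ℂ) ^ (-s - 1) + s * ((N : ℂ) ^ (-s - 1) * Complex.log N * (-1))) / 12) s := by
  have hs1 : 1 - s ≠ 0 := sub_ne_zero.2 hs.symm
  have e : zetaApprox N = fun s => ∑ k ∈ Finset.Icc 1 N, (k : ℂ) ^ (-s)
      - (N : ℂ) ^ (1 - s) / (1 - s) - (N : ℂ) ^ (-s) / 2 + s * (N : ℂ) ^ (-s - 1) / 12 :=
    funext (zetaApprox_eq N)
  rw [e]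
  have hneg : HasDerivAt (fun s : ℂ => -s) (-1) s := hasDerivAt_neg s
  have hsub : HasDerivAt (fun s : ℂ => 1 - s) (-1) s := (hasDerivAt_id s).const_sub 1
  have hneg1 : HasDerivAt (fun s : ℂ => -s - 1) (-1) s := hneg.sub_const 1
  refine (((HasDerivAt.fun_sum fun k hk => ?_).sub
    ((hasDerivAt_natCast_cpow hN hsub).div hsub hs1)).sub
    ((hasDerivAt_natCast_cpow hN hneg).div_const 2)).add
    (((hasDerivAt_id s).mul (hasDerivAt_natCast_cpow hN hneg1)).div_const 12)
  exact hasDerivAt_natCast_cpow (Finset.mem_Icc.1 hk).1 hneg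

/-- A bounded convex open set containing `-1` and `2 + 2i`, on which the increments of `zetaApprox`
are uniformly summable. The tilted half-plane `Re s - Im s < 1` excludes the pole at `1` without
losing convexity. -/
def zetaRegion : Set ℂ := {s | -2 < s.re} ∩ Metric.ball 0 4 ∩ {s | s.re - s.im < 1}

theorem isOpen_zetaRegion : IsOpen zetaRegion :=
  ((isOpen_lt continuous_const Complex.continuous_re).inter Metric.isOpen_ball).inter
    (isOpen_lt (Complex.continuous_re.sub Complex.continuous_im) continuous_const)

theorem isPreconnected_zetaRegion : IsPreconnected zetaRegion := by
  refine (((convex_halfSpace_re_gt (-2)).inter (convex_ball 0 4)).inter ?_).isPreconnected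
  exact convex_halfSpace_lt (f := fun s : ℂ => s.re - s.im)
    ⟨fun x y => by simp; ring, fun c x => by simp; ring⟩ 1

theorem ne_one_of_mem_zetaRegion {s : ℂ} (hs : s ∈ zetaRegion) : s ≠ 1 := by
  rintro rfl
  have := hs.2
  simp at this

theorem tendsto_deriv_zetaApprox :
    Tendsto (fun N => deriv (zetaApprox N) (-1)) atTop (nhds (deriv riemannZeta (-1))) := by
  let D : ℕ → ℂ → ℂ := fun i s => zetaApprox (i + 1 + 1) s - zetaApprox (i + 1) s
  have hu : Summable fun i : ℕ => (7 ^ 4 : ℝ) * (1 / ((i + 1 : ℕ) : ℝ) ^ 2) :=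
    ((summable_nat_add_iff 1).2 (Real.summable_one_div_nat_pow.2 one_lt_two)).mul_left _
  have hdiff : ∀ N : ℕ, DifferentiableOn ℂ (zetaApprox (N + 1)) zetaRegion := fun N s hs =>
    (hasDerivAt_zetaApprox (by omega)
      (ne_one_of_mem_zetaRegion hs)).differentiableAt.differentiableWithinAt
  have hD : ∀ i, DifferentiableOn ℂ (D i) zetaRegion := fun i => (hdiff (i + 1)).sub (hdiff i)
  have hle : ∀ (i : ℕ) (s : ℂ), s ∈ zetaRegion →
      ‖D i s‖ ≤ (7 ^ 4 : ℝ) * (1 / ((i + 1 : ℕ) : ℝ) ^ 2) := fun i s hs =>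
    zetaApprox_increments (by omega) hs.1.1 (by simpa using hs.1.2)
      (ne_one_of_mem_zetaRegion hs)
  have hmem : (-1 : ℂ) ∈ zetaRegion := by
    refine ⟨⟨?_, ?_⟩, ?_⟩ <;> simp
  have hmem' : (2 + 2 * Complex.I : ℂ) ∈ zetaRegion := by
    refine ⟨⟨by simp, ?_⟩, by simp⟩
    rw [mem_ball_zero_iff]
    refine lt_of_pow_lt_pow_left₀ 2 (by norm_num) ?_
    rw [← Complex.normSq_eq_norm_sq, Complex.normSq_apply]
    norm_num
  have hsum : DifferentiableOn ℂ (fun s => ∑' i, D i s) zetaRegion :=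
    Complex.differentiableOn_tsum_of_summable_norm hu hD isOpen_zetaRegion hle
  have hderiv := Complex.hasSum_deriv_of_summable_norm hu hD isOpen_zetaRegion hle hmem
  have hzeta : DifferentiableOn ℂ (fun s => riemannZeta s - zetaApprox 1 s) zetaRegion :=
    DifferentiableOn.sub (fun s hs => (differentiableAt_riemannZeta
      (ne_one_of_mem_zetaRegion hs)).differentiableWithinAt) (hdiff 0)
  -- Both sides agree near `2 + 2i`, where the Dirichlet series of `ζ` converges.
  have heq : Set.EqOn (fun s => ∑' i, D i s) (fun s => riemannZeta s - zetaApprox 1 s)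
      zetaRegion := by
    refine (hsum.analyticOnNhd isOpen_zetaRegion).eqOn_of_preconnected_of_eventuallyEq
      (hzeta.analyticOnNhd isOpen_zetaRegion) isPreconnected_zetaRegion hmem' ?_
    have hre : ∀ᶠ s : ℂ in nhds (2 + 2 * Complex.I), 1 < s.re :=
      (isOpen_lt continuous_const Complex.continuous_re).mem_nhds (by simp)
    filter_upwards [hre, isOpen_zetaRegion.mem_nhds hmem'] with s hs hsU
    have hsm : Summable fun i => D i s := hu.of_norm_bounded fun i => hle i s hsU
    refine tendsto_nhds_unique hsm.hasSum.tendsto_sum_nat ?_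
    have ht := ((tendsto_add_atTop_iff_nat 1).2 (tendsto_zetaApprox hs)).sub_const
      (zetaApprox 1 s)
    refine ht.congr fun n => ?_
    exact (Finset.sum_range_sub (fun i => zetaApprox (i + 1) s) n).symm
  have hd1 : deriv (fun s => ∑' i, D i s) (-1)
      = deriv riemannZeta (-1) - deriv (zetaApprox 1) (-1) := by
    rw [(heq.eventuallyEq_of_mem (isOpen_zetaRegion.mem_nhds hmem)).deriv_eq]
    exact deriv_fun_sub (differentiableAt_riemannZeta (ne_one_of_mem_zetaRegion hmem))
      ((hdiff 0).differentiableAt (isOpen_zetaRegion.mem_nhds hmem))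
  rw [hd1] at hderiv
  have ht := hderiv.tendsto_sum_nat.add_const (deriv (zetaApprox 1) (-1))
  rw [sub_add_cancel] at ht
  refine (tendsto_add_atTop_iff_nat 1).1 (ht.congr fun n => ?_)
  have hdd : ∀ i, deriv (D i) (-1)
      = deriv (zetaApprox (i + 1 + 1)) (-1) - deriv (zetaApprox (i + 1)) (-1) := fun i =>
    deriv_fun_sub ((hdiff (i + 1)).differentiableAt (isOpen_zetaRegion.mem_nhds hmem))
      ((hdiff i).differentiableAt (isOpen_zetaRegion.mem_nhds hmem))
  simp only [hdd]
  rw [Finset.sum_range_sub (fun i => deriv (zetaApprox (i + 1)) (-1)) n]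
  simp

theorem deriv_zetaApprox_neg_one {N : ℕ} (hN : 1 ≤ N) :
    deriv (zetaApprox N) (-1) = ((-emSeq (fun x : ℝ => x ^ 2 * Real.log x / 2 - x ^ 2 / 4)
      (fun x => x * Real.log x) (fun x => Real.log x + 1) N : ℝ) : ℂ) := by
  rw [(hasDerivAt_zetaApprox hN (s := -1) (by norm_num)).deriv, emSeq]
  simp only [← Complex.natCast_log, neg_neg, show (1 : ℂ) - -1 = 2 by norm_num,
    show (1 : ℂ) - 1 = 0 by norm_num, Complex.cpow_one, Complex.cpow_ofNat, Complex.cpow_zero,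
    smul_eq_mul]
  push_cast
  simp only [mul_neg, mul_one, Finset.sum_neg_distrib]
  ring

/-- Glaisher's asymptotics of `∑ k log k`, with the constant `log A = 1 / 12 - ζ'(-1)`. -/
theorem sum_mul_log_expansion {N : ℕ} (hN : 1 ≤ N) :
    |∑ k ∈ Finset.Icc 1 N, (k : ℝ) * Real.log k - (((N : ℝ) ^ 2 / 2 + N / 2 + 1 / 12) * Real.log N
      - (N : ℝ) ^ 2 / 4 + 1 / 12 - (deriv riemannZeta (-1)).re)| ≤ 4 / (N : ℝ) ^ 2 := by
  have hlim : Tendsto (emSeq (fun x : ℝ => x ^ 2 * Real.log x / 2 - x ^ 2 / 4)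
      (fun x => x * Real.log x) (fun x => Real.log x + 1)) atTop
      (nhds (-(deriv riemannZeta (-1)).re)) := by
    have h := ((Complex.continuous_re.tendsto _).comp tendsto_deriv_zetaApprox).neg
    refine h.congr' ?_
    filter_upwards [eventually_ge_atTop 1] with n hn
    simp only [Function.comp, deriv_zetaApprox_neg_one hn, Complex.ofReal_re, neg_neg]
  have h := norm_sub_le_of_cubic_increments (fun N hN => glaisher_increments hN) hlim hN
  rw [Real.norm_eq_abs, emSeq] at h
  convert h using 2
  · simp only [smul_eq_mul]
    ring
  · norm_num

/-! ### Assembling the expansion -/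

theorem log_one_add_expansion {x : ℝ} (h0 : 0 ≤ x) (h1 : x ≤ 1 / 2) :
    |Real.log (1 + x) - (x - x ^ 2 / 2)| ≤ 2 * x ^ 3 := by
  have h := Real.abs_log_sub_add_sum_range_le (x := -x) (by rw [abs_neg, abs_of_nonneg h0]; linarith) 2
  rw [abs_neg, abs_of_nonneg h0] at h
  simp only [Finset.sum_range_succ, Finset.sum_range_zero] at h
  have h2 : x ^ (2 + 1) / (1 - x) ≤ 2 * x ^ 3 := by
    rw [div_le_iff₀ (by linarith)]
    have : 0 ≤ x ^ 3 * (1 - 2 * x) := mul_nonneg (by positivity) (by linarith)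
    norm_num
    linarith
  refine le_trans (le_of_eq ?_) (h.trans h2)
  congr 1
  push_cast
  ring_nf

/-- Here `S`, `B`, `Sn`, `lam` stand for `log N!`, `∑ k log k`, `log (dN + m)!` and `log (dN + m)`,
and `e₁`, …, `e₄` for the remainders in their expansions; `L = log N`, `D = log d`, `l = log (2π)`,
`z = ζ'(-1)`. -/
theorem residual_identity {d m N c t L D l z S B Sn lam e₁ e₂ e₃ e₄ : ℝ} (hd : d ≠ 0) (hN : N ≠ 0)
    (hS : S = N * L - N + L / 2 + l / 2 + 1 / (12 * N) + e₁)
    (hB : B = (N ^ 2 / 2 + N / 2 + 1 / 12) * L - N ^ 2 / 4 + 1 / 12 - z + e₂)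
    (hSn : Sn = (d * N + m) * lam - (d * N + m) + lam / 2 + l / 2 + e₃)
    (hlam : lam = D + L + (m / (d * N) - (m / (d * N)) ^ 2 / 2) + e₄) :
    ((d * N + m) ^ 2 * t ^ 2
      + (Sn - d * S - (d * N + m) * D
        + (d / 2 * N ^ 2 + (1 + 2 * c + 2 * m) / 2 * N + m * (1 + 2 * c + m) / (2 * d))
          * (L - lam))
      + d * (-(N * (N + 1) / 2) * L + ((N + 1) * S - B)))
    - ((t ^ 2 - 3 / (4 * d) - D / (2 * d)) * (d * N + m) ^ 2
      + 1 / 2 * (d * N + m) * lam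
      + (l / 2 - 1 - (1 + 2 * c + d) / (2 * d) * D) * (d * N + m)
      + (6 - d) / 12 * lam + d * z + d / 12 * D + l / 2
      + m * (N + L / 2 - l / 2 + (d - 2 * c - 1) / (2 * d)))
    = d * N * e₁ - d * e₂ + e₃
      + (-(d / 2) * N ^ 2 + (d - 1 - 2 * c - 2 * m) / 2 * N
          + (m / 2 + d / 12 - m * (1 + 2 * c + m) / (2 * d))) * e₄
      + ((m / 2 + d / 12 - m * (1 + 2 * c + m) / (2 * d))
          * (m / (d * N) - (m / (d * N)) ^ 2 / 2)
        - (d - 1 - 2 * c - 2 * m) / 2 * N * ((m / (d * N)) ^ 2 / 2)) := by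
  rw [hSn, hB, hS, hlam]
  field_simp
  ring

/-- Bound on the right-hand side of `residual_identity`, with `x = m / (d N)`. -/
theorem residual_bound {d N x q₀ q₁ e₁ e₂ e₃ e₄ : ℝ} (hd : 0 ≤ d) (hN : 1 ≤ N)
    (hx0 : 0 ≤ x) (hx : x ≤ 1 / N)
    (h₁ : |e₁| ≤ 12 / N ^ 2) (h₂ : |e₂| ≤ 4 / N ^ 2) (h₃ : |e₃| ≤ 13 / N) (h₄ : |e₄| ≤ 2 / N ^ 3) :
    |d * N * e₁ - d * e₂ + e₃ + (-(d / 2) * N ^ 2 + q₁ * N + q₀) * e₄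
      + (q₀ * (x - x ^ 2 / 2) - q₁ * N * (x ^ 2 / 2))|
      ≤ (17 * d + 13 + 3 * |q₀| + 3 * |q₁|) / N := by
  have hN0 : 0 < N := by linarith
  have hx1 : x ≤ 1 := hx.trans (by rw [div_le_one hN0]; exact hN)
  have t₁ : |d * N * e₁| ≤ 12 * d / N := by
    rw [abs_mul, abs_of_nonneg (by positivity : 0 ≤ d * N)]
    calc d * N * |e₁| ≤ d * N * (12 / N ^ 2) := by gcongr
      _ = 12 * d / N := by field_simp
  have t₂ : |d * e₂| ≤ 4 * d / N := by
    rw [abs_mul, abs_of_nonneg hd]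
    calc d * |e₂| ≤ d * (4 / N ^ 2) := by gcongr
      _ = 4 * d / N ^ 2 := by ring
      _ ≤ 4 * d / N := by
        gcongr
        nlinarith
  have t₄ : |(-(d / 2) * N ^ 2 + q₁ * N + q₀) * e₄| ≤ (d + 2 * |q₁| + 2 * |q₀|) / N := by
    have hq : |-(d / 2) * N ^ 2 + q₁ * N + q₀| ≤ (d / 2 + |q₁| + |q₀|) * N ^ 2 := by
      have a1 : |-(d / 2) * N ^ 2| = d / 2 * N ^ 2 := by
        rw [neg_mul, abs_neg, abs_of_nonneg (by positivity)]
      have a2 : |q₁ * N| ≤ |q₁| * N ^ 2 := by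
        rw [abs_mul, abs_of_pos hN0]
        gcongr
        nlinarith
      have a3 : |q₀| ≤ |q₀| * N ^ 2 := le_mul_of_one_le_right (abs_nonneg _) (by nlinarith)
      have := abs_add_three (-(d / 2) * N ^ 2) (q₁ * N) q₀
      linarith
    rw [abs_mul]
    calc _ ≤ (d / 2 + |q₁| + |q₀|) * N ^ 2 * (2 / N ^ 3) := by gcongr
      _ = _ := by field_simp
  have t₅ : |q₀ * (x - x ^ 2 / 2)| ≤ |q₀| / N := by
    rw [abs_mul, abs_of_nonneg (by nlinarith : 0 ≤ x - x ^ 2 / 2)]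
    calc |q₀| * (x - x ^ 2 / 2) ≤ |q₀| * (1 / N) := by
          gcongr
          nlinarith
      _ = |q₀| / N := by ring
  have t₆ : |q₁ * N * (x ^ 2 / 2)| ≤ |q₁| / N := by
    rw [abs_mul, abs_mul, abs_of_pos hN0, abs_of_nonneg (by positivity : 0 ≤ x ^ 2 / 2)]
    calc |q₁| * N * (x ^ 2 / 2) ≤ |q₁| * N * ((1 / N) ^ 2 / 1) := by gcongr; norm_num
      _ = |q₁| / N := by field_simp
  have e : (17 * d + 13 + 3 * |q₀| + 3 * |q₁|) / N = 12 * d / N + 4 * d / N + 13 / N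
      + (d + 2 * |q₁| + 2 * |q₀|) / N + (|q₀| / N + |q₁| / N) := by ring
  rw [e]
  refine (abs_add_le _ _).trans (add_le_add ((abs_add_le _ _).trans (add_le_add
    ((abs_add_le _ _).trans (add_le_add ((abs_sub _ _).trans (add_le_add t₁ t₂)) h₃)) t₄))
    ((abs_sub _ _).trans (add_le_add t₅ t₆)))


/-- Asymptotic expansion of the term `A₁` from the multi-fold decomposition
(Lemma 2.2), where `A₁ = n²t² + log c_{N,d}(m) + d·log Z_N^Gin` with `n = dN+m`
and `Z_N^Gin = N^{-N(N+1)/2} ∏_{k=1}^N k!`. -/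
theorem stmt_10 (d : ℕ) (hd : 1 ≤ d) (m : ℕ) (hm : m < d) (c t : ℝ) (hc : -1 < c)
    (ht : 0 ≤ t) :
    ∃ C : ℝ, 0 < C ∧ ∃ N₀ : ℕ, ∀ N : ℕ, N₀ ≤ N →
      |((((d * N + m : ℕ) : ℝ)) ^ 2 * t ^ 2
        + Real.log (((Nat.factorial (d * N + m) : ℝ) / ((Nat.factorial N : ℝ)) ^ d) *
            ((d : ℝ) ^ (d * N + m))⁻¹ *
            ((N : ℝ) / ((d * N + m : ℕ) : ℝ)) ^
              ((d : ℝ) / 2 * (N : ℝ) ^ 2 + ((1 + 2 * c + 2 * (m : ℝ)) / 2) * (N : ℝ)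
                + (m : ℝ) * (1 + 2 * c + (m : ℝ)) / (2 * (d : ℝ))))
        + (d : ℝ) * Real.log ((N : ℝ) ^ (-(((N : ℝ) * ((N : ℝ) + 1)) / 2)) *
            ∏ k ∈ Finset.Icc 1 N, (Nat.factorial k : ℝ)))
        -
        ((t ^ 2 - 3 / (4 * (d : ℝ)) - Real.log d / (2 * (d : ℝ))) * (((d * N + m : ℕ) : ℝ)) ^ 2
          + (1 / 2) * (((d * N + m : ℕ) : ℝ)) * Real.log ((d * N + m : ℕ) : ℝ)
          + (Real.log (2 * Real.pi) / 2 - 1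
              - ((1 + 2 * c + (d : ℝ)) / (2 * (d : ℝ))) * Real.log d) * (((d * N + m : ℕ) : ℝ))
          + ((6 - (d : ℝ)) / 12) * Real.log ((d * N + m : ℕ) : ℝ)
          + (d : ℝ) * (deriv riemannZeta (-1)).re
          + ((d : ℝ) / 12) * Real.log d + Real.log (2 * Real.pi) / 2
          + (m : ℝ) * ((N : ℝ) + Real.log N / 2 - Real.log (2 * Real.pi) / 2
              + ((d : ℝ) - 2 * c - 1) / (2 * (d : ℝ))))|
        ≤ C / ((d * N + m : ℕ) : ℝ) := by
  have hd' : (1 : ℝ) ≤ d := by exact_mod_cast hd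
  have hm' : (m : ℝ) ≤ d := by exact_mod_cast hm.le
  set q₀ : ℝ := m / 2 + d / 12 - m * (1 + 2 * c + m) / (2 * d) with hq₀
  set q₁ : ℝ := (d - 1 - 2 * c - 2 * m) / 2 with hq₁
  have hK : 0 < 17 * (d : ℝ) + 13 + 3 * |q₀| + 3 * |q₁| := by positivity
  -- The residual is at most `(17 d + …) / N`, and `d N + m ≤ 2 d N`; `N ≥ 2` ensures
  -- `m / (d N) ≤ 1 / 2` for the expansion of `log (1 + m / (d N))`.
  refine ⟨(17 * d + 13 + 3 * |q₀| + 3 * |q₁|) * (2 * d), by positivity, 2, fun N hN => ?_⟩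
  have hN1 : 1 ≤ N := by omega
  have hN' : (2 : ℝ) ≤ N := by exact_mod_cast hN
  have hN0 : (0 : ℝ) < N := by linarith
  have hn1 : 1 ≤ d * N + m := by nlinarith
  have hcast : ((d * N + m : ℕ) : ℝ) = d * N + m := by push_cast; ring
  have hnN : (N : ℝ) ≤ d * N + m := by nlinarith [Nat.cast_nonneg (α := ℝ) m]
  have hn0 : (0 : ℝ) < d * N + m := by linarith
  have hx : (m : ℝ) / (d * N) ≤ 1 / N := by
    rw [div_le_div_iff₀ (by positivity) hN0]
    nlinarith
  have hx0 : 0 ≤ (m : ℝ) / (d * N) := by positivity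
  have hxhalf : (m : ℝ) / (d * N) ≤ 1 / 2 := hx.trans (by gcongr)
  have hlogZ : Real.log ((N : ℝ) ^ (-(((N : ℝ) * ((N : ℝ) + 1)) / 2)) *
      ∏ k ∈ Finset.Icc 1 N, (Nat.factorial k : ℝ))
      = -((N : ℝ) * (N + 1) / 2) * Real.log N + ((N + 1) * Real.log (N.factorial : ℝ)
        - ∑ k ∈ Finset.Icc 1 N, (k : ℝ) * Real.log k) := by
    rw [Real.log_mul (by positivity) (by positivity), Real.log_rpow hN0,
      Real.log_prod (fun k _ => by positivity), sum_log_factorial]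
  have hlogc : ∀ P : ℝ, Real.log (((Nat.factorial (d * N + m) : ℝ) / ((Nat.factorial N : ℝ)) ^ d) *
      ((d : ℝ) ^ (d * N + m))⁻¹ * ((N : ℝ) / (d * N + m)) ^ P)
      = Real.log ((d * N + m).factorial : ℝ) - d * Real.log (N.factorial : ℝ)
        - (d * N + m) * Real.log d + P * (Real.log N - Real.log (d * N + m)) := by
    intro P
    have hp : 0 < (N : ℝ) / (d * N + m) := by positivity
    rw [Real.log_mul (by positivity) (by positivity), Real.log_mul (by positivity) (by positivity),
      Real.log_div (by positivity) (by positivity), Real.log_inv, Real.log_pow, Real.log_pow,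
      Real.log_rpow hp, Real.log_div hN0.ne' hn0.ne', hcast]
    ring
  -- `h₁`, `h₂`, `h₃'`, `h₄` bound the remainders `e₁`, …, `e₄` of `residual_identity`.
  have h₁ := log_factorial_expansion hN1
  have h₂ := sum_mul_log_expansion hN1
  have h₃ := log_factorial_expansion hn1
  rw [hcast] at h₃
  have h₃' : |Real.log ((d * N + m).factorial : ℝ) - (((d : ℝ) * N + m) * Real.log (d * N + m)
      - (d * N + m) + Real.log (d * N + m) / 2 + Real.log (2 * π) / 2)| ≤ 13 / N := by
    have b1 : |1 / (12 * ((d : ℝ) * N + m))| ≤ 1 / N := by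
      rw [abs_of_nonneg (by positivity)]
      gcongr
      linarith
    have b2 : 12 / ((d : ℝ) * N + m) ^ 2 ≤ 12 / N := by
      gcongr
      nlinarith
    have b3 : (13 : ℝ) / N = 12 / N + 1 / N := by ring
    rw [b3]
    refine le_trans (le_of_eq ?_) ((abs_add_le _ _).trans (add_le_add (h₃.trans b2) b1))
    congr 1
    ring
  have h₄ : |Real.log (d * N + m) - (Real.log d + Real.log N
      + ((m : ℝ) / (d * N) - ((m : ℝ) / (d * N)) ^ 2 / 2))| ≤ 2 / (N : ℝ) ^ 3 := by
    have h := log_one_add_expansion hx0 hxhalf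
    have e : Real.log ((d : ℝ) * N + m)
        = Real.log d + Real.log N + Real.log (1 + m / (d * N)) := by
      rw [← Real.log_mul (by positivity) (by positivity),
        ← Real.log_mul (by positivity) (by positivity)]
      congr 1
      field_simp
    rw [e, add_sub_add_left_eq_sub]
    refine h.trans ?_
    calc 2 * ((m : ℝ) / (d * N)) ^ 3 ≤ 2 * (1 / N) ^ 3 := by gcongr
      _ = 2 / (N : ℝ) ^ 3 := by ring
  rw [hcast, hlogc, hlogZ, residual_identity (by positivity) hN0.ne'
    (add_sub_cancel _ _).symm (add_sub_cancel _ _).symm (add_sub_cancel _ _).symm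
    (add_sub_cancel _ _).symm]
  refine (residual_bound (by linarith) (by linarith) hx0 hx h₁ h₂ h₃' h₄).trans ?_
  rw [← hq₀, ← hq₁, div_le_div_iff₀ hN0 hn0, mul_assoc]
  gcongr
  nlinarith
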